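/- Bounded Hahn meromorphic functions are Hahn holomorphic (z-case): Let δ > 0, σ ∈ (0,∞], and let f, g : Ω(δ,σ) → ℂ be z-Hahn holomorphic with g not identically zero, so that (by nonvanishing of g near zero) the quotient h := f/g is defined on Ω(δ₀,σ) for some δ₀ > 0. If h is bounded on the real ray {w ∈ ℝ : w < log δ₀}, then h is z-Hahn holomorphic: there exist δ'' ∈ (0,δ₀], a countable well-ordered set S' ⊂ [0,∞), and complex coefficients (c_γ)_{γ∈S'} with ∑_{γ∈S'} |c_γ| (δ'')^γ < ∞ and h(w) = ∑_{γ∈S'} c_γ e^{γw} for all w ∈ Ω(δ'',σ). -/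

import Mathlib

noncomputable section

/-- The logarithm of the punctured disc of radius `δ` and half-opening angle `σ`
on the logarithmic cover of `ℂ`. -/
def Omega (δ : ℝ) (σ : ENNReal) : Set ℂ :=
  {w : ℂ | w.re < Real.log δ ∧ ENNReal.ofReal |w.im| < σ}

/-- A complex valued function is z-Hahn holomorphic on `Ω(δ,σ)` if it is holomorphic
there and is represented near zero by a normally convergent generalized power series. -/
def ZHahnHolomorphicOn (δ : ℝ) (σ : ENNReal) (f : ℂ → ℂ) : Prop :=
  DifferentiableOn ℂ f (Omega δ σ) ∧
  ∃ δ' ∈ Set.Ioc 0 δ, ∃ S : Set ℝ, S.Countable ∧ S.IsWF ∧ S ⊆ Set.Ici 0 ∧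
    ∃ a : ℝ → ℂ,
      (Summable fun α : S => ‖a (α : ℝ)‖ * δ' ^ (α : ℝ)) ∧
      ∀ w ∈ Omega δ' σ, f w = ∑' α : S, Complex.exp (((α : ℝ) : ℂ) * w) * a (α : ℝ)

/-- coefficients supported in `T` with summable weights -/
def HGood (t : ℝ) (T : Set ℝ) (a : ℝ → ℂ) : Prop :=
  (∀ α, a α ≠ 0 → α ∈ T) ∧ Summable fun α : ℝ => ‖a α‖ * Real.exp (α * t)

def hev (a : ℝ → ℂ) (w : ℂ) : ℂ := ∑' α : ℝ, a α * Complex.exp ((α : ℂ) * w)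

def hwt (t : ℝ) (a : ℝ → ℂ) : ℝ := ∑' α : ℝ, ‖a α‖ * Real.exp (α * t)

lemma norm_cexp_real (α : ℝ) (w : ℂ) : ‖Complex.exp ((α : ℂ) * w)‖ = Real.exp (α * w.re) := by
  rw [Complex.norm_exp]; simp

lemma term_le {ι : Type*} {t : ℝ} (e : ι → ℝ) (c : ι → ℂ) (he : ∀ i, c i ≠ 0 → 0 ≤ e i)
    {w : ℂ} (hw : w.re ≤ t) (i : ι) :
    ‖c i * Complex.exp ((e i : ℂ) * w)‖ ≤ ‖c i‖ * Real.exp (e i * t) := by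
  rw [norm_mul, norm_cexp_real]
  by_cases h : c i = 0
  · simp [h]
  · have := he i h
    gcongr

lemma term_summable {ι : Type*} {t : ℝ} (e : ι → ℝ) (c : ι → ℂ) (he : ∀ i, c i ≠ 0 → 0 ≤ e i)
    (hs : Summable fun i => ‖c i‖ * Real.exp (e i * t)) {w : ℂ} (hw : w.re ≤ t) :
    Summable fun i => ‖c i * Complex.exp ((e i : ℂ) * w)‖ :=
  Summable.of_nonneg_of_le (fun _ => norm_nonneg _) (term_le e c he hw) hs

lemma hev_norm_le {t : ℝ} {T : Set ℝ} {a : ℝ → ℂ} (hT : T ⊆ Set.Ici 0) (ha : HGood t T a)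
    {w : ℂ} (hw : w.re ≤ t) : ‖hev a w‖ ≤ hwt t a :=
  tsum_of_norm_bounded ha.2.hasSum (term_le id a (fun i h => hT (ha.1 i h)) hw)

lemma collapse {ι : Type*} {t : ℝ} {T : Set ℝ} (hT : T ⊆ Set.Ici 0) (e : ι → ℝ) (c : ι → ℂ)
    (he : ∀ i, c i ≠ 0 → e i ∈ T)
    (hs : Summable fun i => ‖c i‖ * Real.exp (e i * t)) :
    ∃ a, HGood t T a ∧ hwt t a ≤ ∑' i, ‖c i‖ * Real.exp (e i * t) ∧
      ∀ w : ℂ, w.re ≤ t → hev a w = ∑' i, c i * Complex.exp ((e i : ℂ) * w) := by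
  have key := hs.hasSum.tsum_fiberwise e
  have hfib : ∀ γ : ℝ, (∑' i : e ⁻¹' {γ}, ‖c i‖ * Real.exp (e i * t))
      = (∑' i : e ⁻¹' {γ}, ‖c i‖) * Real.exp (γ * t) := by
    intro γ
    rw [← tsum_mul_right]
    refine tsum_congr fun i => ?_
    have : e i = γ := i.2
    rw [this]
  have hfs : ∀ γ : ℝ, Summable fun i : e ⁻¹' {γ} => ‖c i‖ := by
    intro γ
    have h1 : Summable fun i : e ⁻¹' {γ} => ‖c i‖ * Real.exp (e i * t) := hs.subtype _
    have h2 : (fun i : e ⁻¹' {γ} => ‖c i‖ * Real.exp (e i * t)) =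
        fun i : e ⁻¹' {γ} => ‖c i‖ * Real.exp (γ * t) := by
      funext i
      have : e i = γ := i.2
      rw [this]
    rw [h2] at h1
    exact (summable_mul_right_iff (Real.exp_pos _).ne').1 h1
  simp only [hfib] at key
  have hle : ∀ γ : ℝ, ‖∑' i : e ⁻¹' {γ}, c i‖ * Real.exp (γ * t) ≤
      (∑' i : e ⁻¹' {γ}, ‖c i‖) * Real.exp (γ * t) := by
    intro γ
    gcongr
    exact norm_tsum_le_tsum_norm (hfs γ)
  have hsum : Summable fun γ : ℝ => ‖∑' i : e ⁻¹' {γ}, c i‖ * Real.exp (γ * t) :=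
    Summable.of_nonneg_of_le (fun _ => by positivity) hle key.summable
  refine ⟨fun γ => ∑' i : e ⁻¹' {γ}, c i, ⟨?_, hsum⟩, ?_, ?_⟩
  · intro γ hγ
    by_contra hn
    apply hγ
    have : ∀ i : e ⁻¹' {γ}, c i = 0 := by
      intro i
      by_contra h
      have h1 := he i h
      have h2 : e i = γ := i.2
      rw [h2] at h1
      exact hn h1
    simp [this]
  · rw [← key.tsum_eq]
    exact hsum.tsum_le_tsum hle key.summable
  · intro w hw
    have h1 := (term_summable e c (fun i h => hT (he i h)) hs hw).of_norm
    have h2 := h1.hasSum.tsum_fiberwise e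
    rw [← h2.tsum_eq]
    refine tsum_congr fun γ => ?_
    rw [← tsum_mul_right]
    refine tsum_congr fun i => ?_
    have : e i = γ := i.2
    rw [this]

lemma hmul {t : ℝ} {A B T : Set ℝ} {a b : ℝ → ℂ} (hA : A ⊆ Set.Ici 0) (hB : B ⊆ Set.Ici 0)
    (hT : ∀ x ∈ A, ∀ y ∈ B, x + y ∈ T) (hT0 : T ⊆ Set.Ici 0)
    (ha : HGood t A a) (hb : HGood t B b) :
    ∃ c, HGood t T c ∧ hwt t c ≤ hwt t a * hwt t b ∧
      ∀ w : ℂ, w.re ≤ t → hev c w = hev a w * hev b w := by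
  have hfun : (fun p : ℝ × ℝ => ‖a p.1 * b p.2‖ * Real.exp ((p.1 + p.2) * t)) =
      fun p : ℝ × ℝ => (‖a p.1‖ * Real.exp (p.1 * t)) * (‖b p.2‖ * Real.exp (p.2 * t)) := by
    funext p
    rw [norm_mul, add_mul, Real.exp_add]; ring
  have hs : Summable fun p : ℝ × ℝ => (‖a p.1‖ * Real.exp (p.1 * t)) * (‖b p.2‖ * Real.exp (p.2 * t)) :=
    ha.2.mul_of_nonneg hb.2 (fun _ => by positivity) (fun _ => by positivity)
  obtain ⟨c, h1, h2, h3⟩ := collapse (t := t) hT0 (fun p : ℝ × ℝ => p.1 + p.2)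
    (fun p => a p.1 * b p.2)
    (fun p hp => hT _ (ha.1 _ (left_ne_zero_of_mul hp)) _ (hb.1 _ (right_ne_zero_of_mul hp)))
    (by rw [hfun]; exact hs)
  refine ⟨c, h1, ?_, ?_⟩
  · refine h2.trans_eq ?_
    rw [hfun]
    exact (ha.2.tsum_mul_tsum hb.2 hs).symm
  · intro w hw
    rw [h3 w hw]
    have e1 := term_summable id a (fun i h => hA (ha.1 i h)) ha.2 hw
    have e2 := term_summable id b (fun i h => hB (hb.1 i h)) hb.2 hw
    unfold hev
    have := tsum_mul_tsum_of_summable_norm e1 e2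
    simp only [id] at this
    rw [this]
    refine tsum_congr fun p => ?_
    push_cast
    rw [add_mul, Complex.exp_add]; ring

lemma hpow {t : ℝ} {R : Set ℝ} {r : ℝ → ℂ} (hR : R ⊆ Set.Ici 0) (hr : HGood t R r)
    (hT0 : (AddSubmonoid.closure R : Set ℝ) ⊆ Set.Ici 0) (n : ℕ) :
    ∃ c, HGood t (AddSubmonoid.closure R : Set ℝ) c ∧ hwt t c ≤ hwt t r ^ n ∧
      ∀ w : ℂ, w.re ≤ t → hev c w = hev r w ^ n := by
  induction n with
  | zero =>
    have h0 : ∀ α : ℝ, α ≠ 0 → (Pi.single 0 1 : ℝ → ℂ) α = 0 := fun α h => by simp [h]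
    refine ⟨Pi.single 0 1, ⟨?_, ?_⟩, ?_, ?_⟩
    · intro α hα
      by_cases h : α = 0
      · subst h; exact zero_mem _
      · exact absurd (h0 α h) hα
    · refine summable_of_ne_finset_zero (s := {0}) ?_
      intro α hα
      rw [h0 α (by simpa using hα)]; simp
    · unfold hwt
      rw [tsum_eq_single 0 (fun α hα => by rw [h0 α hα]; simp)]
      simp
    · intro w _
      unfold hev
      rw [tsum_eq_single 0 (fun α hα => by rw [h0 α hα]; simp)]
      simp
  | succ n ih =>
    obtain ⟨c, h1, h2, h3⟩ := ih
    obtain ⟨d, g1, g2, g3⟩ := hmul hT0 hR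
      (fun x hx y hy => add_mem hx (AddSubmonoid.subset_closure hy)) hT0 h1 hr
    refine ⟨d, g1, g2.trans ?_, ?_⟩
    · rw [pow_succ]
      have : 0 ≤ hwt t r := tsum_nonneg fun _ => by positivity
      gcongr
    · intro w hw
      rw [g3 w hw, h3 w hw, pow_succ]

lemma hgeom {t : ℝ} {R : Set ℝ} {r : ℝ → ℂ} (hR : R ⊆ Set.Ici 0) (hr : HGood t R r)
    (hT0 : (AddSubmonoid.closure R : Set ℝ) ⊆ Set.Ici 0) (hlt : hwt t r < 1) :
    ∃ c, HGood t (AddSubmonoid.closure R : Set ℝ) c ∧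
      ∀ w : ℂ, w.re ≤ t → hev c w = (1 - hev r w)⁻¹ := by
  choose c h1 h2 h3 using hpow hR hr hT0
  have h0 : 0 ≤ hwt t r := tsum_nonneg fun _ => by positivity
  have hs : Summable fun p : ℕ × ℝ => ‖c p.1 p.2‖ * Real.exp (p.2 * t) := by
    rw [summable_prod_of_nonneg (fun _ => by positivity)]
    refine ⟨fun n => (h1 n).2, ?_⟩
    exact Summable.of_nonneg_of_le (fun n => tsum_nonneg fun _ => by positivity) h2
      (summable_geometric_of_lt_one h0 hlt)
  obtain ⟨d, g1, -, g3⟩ := collapse (t := t) hT0 (fun p : ℕ × ℝ => p.2)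
    (fun p => c p.1 p.2) (fun p hp => (h1 p.1).1 _ hp) hs
  refine ⟨d, g1, fun w hw => ?_⟩
  rw [g3 w hw]
  have h4 := (term_summable (fun p : ℕ × ℝ => p.2) (fun p => c p.1 p.2)
    (fun p hp => hT0 ((h1 p.1).1 _ hp)) hs hw).of_norm
  rw [h4.tsum_prod]
  have h5 : ∀ n, ∑' α : ℝ, c n α * Complex.exp ((α : ℂ) * w) = hev r w ^ n := fun n => h3 n w hw
  simp only [h5]
  exact tsum_geometric_of_norm_lt_one ((hev_norm_le hR hr hw).trans_lt hlt)

lemma htail {t₀ : ℝ} {s : ℝ → ℂ} (hs : HGood t₀ (Set.Ici 0) s) (h0 : s 0 = 0) :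
    Filter.Tendsto (fun t => hwt t s) Filter.atBot (nhds 0) := by
  have := tendsto_tsum_of_dominated_convergence (𝓕 := Filter.atBot)
    (f := fun (t : ℝ) (α : ℝ) => ‖s α‖ * Real.exp (α * t)) (g := fun _ => (0 : ℝ))
    (bound := fun α : ℝ => ‖s α‖ * Real.exp (α * t₀)) hs.2 ?_ ?_
  · simpa [hwt] using this
  · intro α
    by_cases h : s α = 0
    · simp [h]
    · have h1 : 0 ≤ α := hs.1 α h
      have h2 : 0 < α := lt_of_le_of_ne h1 (fun h' => h (h' ▸ h0))
      have h3 : Filter.Tendsto (fun t : ℝ => Real.exp (α * t)) Filter.atBot (nhds 0) :=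
        Real.tendsto_exp_atBot.comp (Filter.tendsto_id.const_mul_atBot h2)
      simpa using h3.const_mul ‖s α‖
  · filter_upwards [Filter.eventually_le_atBot t₀] with t ht α
    rw [Real.norm_of_nonneg (by positivity)]
    by_cases h : s α = 0
    · simp [h]
    · have h1 : 0 ≤ α := hs.1 α h
      gcongr

lemma hgood_mono {t t' : ℝ} {T : Set ℝ} {a : ℝ → ℂ} (hT : T ⊆ Set.Ici 0) (h : t' ≤ t)
    (ha : HGood t T a) : HGood t' T a := by
  refine ⟨ha.1, Summable.of_nonneg_of_le (fun _ => by positivity) (fun α => ?_) ha.2⟩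
  by_cases h' : a α = 0
  · simp [h']
  · have : 0 ≤ α := hT (ha.1 α h')
    gcongr

/-- factor out the leading term -/
lemma hlead {t : ℝ} {T : Set ℝ} {a : ℝ → ℂ} (hP : T.IsPWO) (hT : T ⊆ Set.Ici 0)
    (ha : HGood t T a) (hne : ∃ α, a α ≠ 0) :
    ∃ β ∈ T, a β ≠ 0 ∧ (∀ α, a α ≠ 0 → β ≤ α) ∧ ∃ r : ℝ → ℂ, r 0 = 0 ∧
      HGood t ((fun x => x - β) '' T ∩ Set.Ici 0) r ∧
      ∀ w : ℂ, w.re ≤ t → hev a w = a β * Complex.exp ((β : ℂ) * w) * (1 - hev r w) := by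
  have hsub : {α | a α ≠ 0} ⊆ T := ha.1
  have hwf : {α | a α ≠ 0}.IsWF := Set.isPWO_iff_isWF.1 (hP.mono hsub)
  have hmin := hwf.min_mem hne
  have hle : ∀ α, a α ≠ 0 → hwf.min hne ≤ α := fun α h => hwf.min_le hne h
  generalize hwf.min hne = β at hmin hle
  have hmin : a β ≠ 0 := hmin
  set s : ℝ → ℂ := fun α => a (α + β) / a β with hsdef
  have hssum : Summable fun α : ℝ => ‖s α‖ * Real.exp (α * t) := by
    have h1 := ((Equiv.addRight β).summable_iff).2 ha.2
    have h2 := h1.mul_right (‖a β‖⁻¹ * Real.exp (-(β * t)))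
    refine h2.congr fun α => ?_
    simp only [Function.comp, Equiv.coe_addRight, hsdef, norm_div]
    rw [add_mul, Real.exp_add, Real.exp_neg]
    field_simp
  have hs1 : s 0 = 1 := by simp [hsdef, hmin]
  have hsT : ∀ α, s α ≠ 0 → α ∈ (fun x => x - β) '' T ∩ Set.Ici 0 := by
    intro α h
    have h1 : a (α + β) ≠ 0 := by
      intro h'; apply h; simp [hsdef, h']
    refine ⟨⟨α + β, hsub h1, by simp⟩, ?_⟩
    have := hle _ h1
    simp only [Set.mem_Ici]; linarith
  set r : ℝ → ℂ := fun α => if α = 0 then 0 else - s α with hrdef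
  refine ⟨β, hsub hmin, hmin, hle, r, by simp [hrdef], ⟨?_, ?_⟩, ?_⟩
  · intro α h
    apply hsT
    intro h'; apply h; simp [hrdef, h']
  · refine Summable.of_nonneg_of_le (fun _ => by positivity) (fun α => ?_) hssum
    gcongr
    by_cases h : α = 0
    · simp [hrdef, h]
    · simp [hrdef, h]
  · intro w hw
    have e1 : hev a w = a β * Complex.exp ((β : ℂ) * w) * hev s w := by
      unfold hev
      rw [← (Equiv.addRight β).tsum_eq, ← tsum_mul_left]
      refine tsum_congr fun α => ?_
      simp only [Equiv.coe_addRight, hsdef]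
      push_cast
      rw [add_mul, Complex.exp_add]
      field_simp
    rw [e1]
    congr 1
    have hS := (term_summable id s (fun α h => (hsT α h).2) hssum hw).of_norm
    unfold hev
    have := hS.tsum_eq_add_tsum_ite 0
    simp only [id] at this
    rw [this, hs1, sub_eq_add_neg, ← tsum_neg]
    congr 1
    · simp
    · refine tsum_congr fun α => ?_
      by_cases h : α = 0 <;> simp [hrdef, h]

/-- from the given series to ours -/
lemma hfrom {δ' : ℝ} (hδ' : 0 < δ') {S : Set ℝ} (a : ℝ → ℂ)
    (hs : Summable fun α : S => ‖a (α : ℝ)‖ * δ' ^ (α : ℝ)) :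
    HGood (Real.log δ') S (S.indicator a) ∧
    ∀ w, ∑' α : S, Complex.exp (((α : ℝ) : ℂ) * w) * a (α : ℝ) = hev (S.indicator a) w := by
  refine ⟨⟨fun α h => Set.mem_of_indicator_ne_zero h, ?_⟩, fun w => ?_⟩
  · have := summable_subtype_iff_indicator (s := S) (f := fun α : ℝ => ‖a α‖ * δ' ^ α) |>.1 hs
    refine this.congr fun α => ?_
    by_cases h : α ∈ S
    · simp [h, Real.rpow_def_of_pos hδ', mul_comm]
    · simp [h]
  · rw [tsum_subtype S (fun α : ℝ => Complex.exp ((α : ℂ) * w) * a α)]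
    refine tsum_congr fun α => ?_
    by_cases h : α ∈ S <;> simp [h, mul_comm]

lemma hcountable {t : ℝ} {T : Set ℝ} {a : ℝ → ℂ} (ha : HGood t T a) : {α | a α ≠ 0}.Countable := by
  refine ha.2.countable_support.mono fun α h => ?_
  have : ‖a α‖ ≠ 0 := norm_ne_zero_iff.2 h
  simp only [Function.mem_support]
  positivity

/-- Bounded Hahn meromorphic functions are Hahn holomorphic (z-case). -/
theorem bounded_hahn_meromorphic_is_hahn_holomorphic
    (δ : ℝ) (hδ : 0 < δ) (σ : ENNReal) (hσ : 0 < σ)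
    (f g : ℂ → ℂ)
    (hfH : ZHahnHolomorphicOn δ σ f) (hgH : ZHahnHolomorphicOn δ σ g)
    (hgne : ∃ w ∈ Omega δ σ, g w ≠ 0)
    (δ₀ : ℝ) (hδ₀ : δ₀ ∈ Set.Ioc 0 δ)
    (hgnonzero : ∀ w ∈ Omega δ₀ σ, g w ≠ 0)
    (hbdd : ∃ M : ℝ, ∀ t : ℝ, t < Real.log δ₀ → ‖f (t : ℂ) / g (t : ℂ)‖ ≤ M) :
    ∃ δ'' ∈ Set.Ioc 0 δ₀, ∃ S' : Set ℝ, S'.Countable ∧ S'.IsWF ∧ S' ⊆ Set.Ici 0 ∧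
      ∃ c : ℝ → ℂ,
        (Summable fun γ : S' => ‖c (γ : ℝ)‖ * δ'' ^ (γ : ℝ)) ∧
        ∀ w ∈ Omega δ'' σ,
          f w / g w = ∑' γ : S', Complex.exp (((γ : ℝ) : ℂ) * w) * c (γ : ℝ) := by
  obtain ⟨-, δf, ⟨hδf, -⟩, A, -, hAwf, hA0, a, hasum, haf⟩ := hfH
  obtain ⟨-, δg, ⟨hδg, -⟩, B, -, hBwf, hB0, b, hbsum, hbg⟩ := hgH
  obtain ⟨ha, haev⟩ := hfrom hδf a hasum
  obtain ⟨hb, hbev⟩ := hfrom hδg b hbsum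
  generalize A.indicator a = a at *
  generalize B.indicator b = b at *
  have hfev : ∀ w ∈ Omega δf σ, f w = hev a w := fun w hw => by rw [haf w hw, haev]
  have hgev : ∀ w ∈ Omega δg σ, g w = hev b w := fun w hw => by rw [hbg w hw, hbev]
  have hreal : ∀ (t η : ℝ), t < Real.log η → (t : ℂ) ∈ Omega η σ := by
    intro t η h
    refine ⟨by simpa using h, by simpa using hσ⟩
  have hbne : ∃ α, b α ≠ 0 := by
    by_contra hcon
    push Not at hcon
    obtain ⟨t, ht⟩ := exists_lt (min (Real.log δ₀) (Real.log δg))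
    have h1 := hgnonzero _ (hreal t δ₀ (ht.trans_le (min_le_left _ _)))
    rw [hgev _ (hreal t δg (ht.trans_le (min_le_right _ _)))] at h1
    apply h1
    simp [hev, hcon]
  obtain ⟨β, hβB, hbβ, -, r, hr0, hr, hrev⟩ := hlead (Set.isPWO_iff_isWF.2 hBwf) hB0 hb hbne
  have htl := htail (s := r) ⟨fun α h => (hr.1 α h).2, hr.2⟩ hr0
  obtain ⟨t₁, ht₁, ht₁0, ht₁f, ht₁g⟩ := ((htl.eventually (gt_mem_nhds one_pos)).and
    ((Filter.eventually_le_atBot (Real.log δ₀)).and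
      ((Filter.eventually_le_atBot (Real.log δf)).and
        (Filter.eventually_le_atBot (Real.log δg))))).exists
  set R : Set ℝ := (fun x => x - β) '' B ∩ Set.Ici 0 with hRdef
  have hR0 : R ⊆ Set.Ici 0 := Set.inter_subset_right
  have hRP : R.IsPWO := by
    refine Set.IsPWO.mono ?_ Set.inter_subset_left
    exact (Set.isPWO_iff_isWF.2 hBwf).image_of_monotone (fun x y h => by simpa using h)
  have hT0 : (AddSubmonoid.closure R : Set ℝ) ⊆ Set.Ici 0 := by
    have : AddSubmonoid.closure R ≤ AddSubmonoid.nonneg ℝ :=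
      AddSubmonoid.closure_le.2 fun x hx => hR0 hx
    exact fun x hx => this hx
  have hTP : (AddSubmonoid.closure R : Set ℝ).IsPWO :=
    Set.IsPWO.addSubmonoid_closure (fun x hx => hR0 hx) hRP
  obtain ⟨u, hu, huev⟩ := hgeom hR0 (hgood_mono hR0 ht₁g hr) hT0 ht₁
  set K : Set ℝ := {z | ∃ x ∈ A, ∃ y ∈ (AddSubmonoid.closure R : Set ℝ), x + y = z} with hKdef
  have hKP : K.IsPWO := by
    open Pointwise in
    have h1 : (A + (AddSubmonoid.closure R : Set ℝ)).IsPWO := (Set.isPWO_iff_isWF.2 hAwf).add hTP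
    exact h1
  have hK0 : K ⊆ Set.Ici 0 := by
    rintro z ⟨x, hx, y, hy, rfl⟩
    exact add_nonneg (Set.mem_Ici.1 (hA0 hx)) (Set.mem_Ici.1 (hT0 hy))
  obtain ⟨k, hk, -, hkev⟩ := hmul (T := K) hA0 hT0 (fun x hx y hy => ⟨x, hx, y, hy, rfl⟩) hK0
    (hgood_mono hA0 ht₁f ha) hu
  have hquot : ∀ w, w.re < t₁ → ENNReal.ofReal |w.im| < σ →
      f w / g w = hev k w * (Complex.exp ((β : ℂ) * w))⁻¹ / b β := by
    intro w h1 h2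
    rw [hfev w ⟨h1.trans_le ht₁f, h2⟩, hgev w ⟨h1.trans_le ht₁g, h2⟩, hkev w h1.le, huev w h1.le,
      hrev w (h1.le.trans ht₁g)]
    simp only [div_eq_mul_inv, mul_inv]
    ring
  have hkβ : ∀ γ, k γ ≠ 0 → β ≤ γ := by
    by_contra hcon
    push Not at hcon
    obtain ⟨γ', hγ', hlt'⟩ := hcon
    obtain ⟨γ, -, hkγ, hγle, q, hq0, hq, hqev⟩ := hlead hKP hK0 hk ⟨γ', hγ'⟩
    have hlt : γ < β := (hγle _ hγ').trans_lt hlt'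
    have htq := htail (s := q) ⟨fun α h => (hq.1 α h).2, hq.2⟩ hq0
    obtain ⟨M, hM⟩ := hbdd
    have hexp : Filter.Tendsto (fun t : ℝ => Real.exp ((β - γ) * t)) Filter.atBot (nhds 0) :=
      Real.tendsto_exp_atBot.comp (Filter.tendsto_id.const_mul_atBot (sub_pos.2 hlt))
    have hlim : Filter.Tendsto (fun t : ℝ => ‖b β‖ * M * Real.exp ((β - γ) * t)
        + ‖k γ‖ * hwt t q) Filter.atBot (nhds (‖b β‖ * M * 0 + ‖k γ‖ * 0)) :=
      (hexp.const_mul _).add (htq.const_mul _)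
    have hge : ∀ᶠ t : ℝ in Filter.atBot, ‖k γ‖ ≤ ‖b β‖ * M * Real.exp ((β - γ) * t)
        + ‖k γ‖ * hwt t q := by
      filter_upwards [Filter.eventually_lt_atBot t₁] with t ht
      have h1 := hM t (ht.trans_le ht₁0)
      rw [hquot (t : ℂ) (by simpa using ht) (by simpa using hσ),
        hqev (t : ℂ) (by simpa using ht.le)] at h1
      simp only [norm_div, norm_mul, norm_inv, norm_cexp_real, Complex.ofReal_re] at h1
      have hbp : 0 < ‖b β‖ := norm_pos_iff.2 hbβ
      rw [div_le_iff₀ hbp, ← div_eq_mul_inv, div_le_iff₀ (Real.exp_pos _)] at h1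
      have h2 : ‖hev q t‖ ≤ hwt t q :=
        hev_norm_le (T := Set.Ici 0) subset_rfl
          (hgood_mono subset_rfl ht.le ⟨fun α h => (hq.1 α h).2, hq.2⟩) (by simp)
      have h3 : 1 - hwt t q ≤ ‖1 - hev q t‖ := by
        have := norm_sub_norm_le (1 : ℂ) (hev q t)
        rw [norm_one] at this
        linarith
      have h4 : Real.exp (β * t) = Real.exp ((β - γ) * t) * Real.exp (γ * t) := by
        rw [← Real.exp_add]; ring_nf
      rw [h4] at h1
      have h5 : ‖k γ‖ * ‖1 - hev q t‖ ≤ M * ‖b β‖ * Real.exp ((β - γ) * t) := by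
        refine le_of_mul_le_mul_right ?_ (Real.exp_pos (γ * t))
        linarith
      have h6 := mul_le_mul_of_nonneg_left h3 (norm_nonneg (k γ))
      linarith
    have := ge_of_tendsto hlim hge
    have hp : 0 < ‖k γ‖ := norm_pos_iff.2 hkγ
    simp at this
    exact hkγ this
  have hlog : Real.exp t₁ ≤ δ₀ := by
    rw [← Real.exp_log hδ₀.1]; exact Real.exp_le_exp.2 ht₁0
  set c : ℝ → ℂ := fun γ => k (γ + β) / b β with hcdef
  have hcsum : Summable fun γ : ℝ => ‖c γ‖ * Real.exp (γ * t₁) := by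
    have h1 := ((Equiv.addRight β).summable_iff).2 hk.2
    have h2 := h1.mul_right (‖b β‖⁻¹ * Real.exp (-(β * t₁)))
    refine h2.congr fun α => ?_
    simp only [Function.comp, Equiv.coe_addRight, hcdef, norm_div]
    rw [add_mul, Real.exp_add, Real.exp_neg]
    field_simp
  have hck : ∀ γ, c γ ≠ 0 → k (γ + β) ≠ 0 := by
    intro γ h h'; apply h; simp [hcdef, h']
  have hcP : {γ | c γ ≠ 0}.IsPWO := by
    refine Set.IsPWO.mono (hKP.image_of_monotone (f := fun x => x - β)
      (fun x y h => by simpa using h)) ?_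
    intro γ h
    exact ⟨γ + β, hk.1 _ (hck γ h), by simp⟩
  refine ⟨Real.exp t₁, ⟨Real.exp_pos _, hlog⟩, {γ | c γ ≠ 0},
    hcountable (T := Set.univ) ⟨fun _ _ => trivial, hcsum⟩, Set.isPWO_iff_isWF.1 hcP, ?_, c, ?_, ?_⟩
  · intro γ h
    have := hkβ _ (hck γ h)
    simp only [Set.mem_Ici]; linarith
  · have h1 : Summable fun γ : {γ | c γ ≠ 0} => ‖c γ‖ * Real.exp (γ * t₁) := hcsum.subtype _
    refine h1.congr fun γ => ?_
    rw [← Real.exp_mul, mul_comm t₁]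
  · rintro w ⟨hw1, hw2⟩
    rw [Real.log_exp] at hw1
    rw [hquot w hw1 hw2, tsum_subtype {γ | c γ ≠ 0}
      (fun γ : ℝ => Complex.exp ((γ : ℂ) * w) * c γ)]
    unfold hev
    rw [← (Equiv.addRight β).tsum_eq, ← tsum_mul_right, ← tsum_div_const]
    refine tsum_congr fun γ => ?_
    have hind : ({γ | c γ ≠ 0} : Set ℝ).indicator
        (fun γ : ℝ => Complex.exp ((γ : ℂ) * w) * c γ) γ = Complex.exp ((γ : ℂ) * w) * c γ := by
      by_cases h : c γ = 0 <;> simp [h]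
    rw [hind]
    simp only [Equiv.coe_addRight, hcdef]
    push_cast
    rw [add_mul, Complex.exp_add]
    have := Complex.exp_ne_zero ((β : ℂ) * w)
    field_simp
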